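/- Let n1 ≥ n2 ≥ 1, let L0 ∈ ℝ^{n1×n2} have rank r ≤ n2/10 with compact SVD L0 = UΣVᵀ (U, V with orthonormal columns), let S0 vanish off Ω and be nonzero on Ω, let Z0 ∈ ℝ^{n1×n2}, and set D = L0 + S0 + Z0, λ = 1/√n1, μ = √(n2/2). Suppose there exist W, F, H ∈ ℝ^{n1×n2} with UVᵀ + W = λ(sign(S0) + F + P_Ω H), W ∈ T⊥, ‖W‖ ≤ 1/2, P_Ω F = 0, ‖F‖_∞ ≤ 1/2, and ‖P_Ω H‖_F ≤ 1/(260√2). Let (L̂, Ŝ) be a minimizer of the √PCP problem with these λ, μ, and put δ := ‖L̂ + Ŝ − D‖_F. Assume further that: (i) if δ ≥ ‖Z0‖_F, then every minimizer (L, S) of StablePCP_c(δ) with this λ satisfies ‖(L, S) − (L0, S0)‖_F ≤ √(320·n1·n2 + 4)·δ; and (ii) if δ ≤ ‖Z0‖_F, then every minimizer (L, S) of StablePCP_c(δ) satisfies ‖(L, S) − (L0, S0)‖_F ≤ √(720·n1·n2 + 2)·‖Z0‖_F. Then ‖(L̂, Ŝ) − (L0, S0)‖_F ≤ 560·√(n1·n2)·‖Z0‖_F.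 -/

import Mathlib

open Matrix
open scoped BigOperators

/-- Frobenius norm of a real matrix. -/
noncomputable def frob {n1 n2 : ℕ} (A : Matrix (Fin n1) (Fin n2) ℝ) : ℝ :=
  Real.sqrt (∑ i, ∑ j, A i j ^ 2)

/-- Entrywise ℓ¹ norm. -/
noncomputable def l1norm {n1 n2 : ℕ} (A : Matrix (Fin n1) (Fin n2) ℝ) : ℝ :=
  ∑ i, ∑ j, |A i j|

/-- Trace inner product ⟨A,B⟩ = trace(AᵀB). -/
noncomputable def minner {n1 n2 : ℕ} (A B : Matrix (Fin n1) (Fin n2) ℝ) : ℝ :=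
  ∑ i, ∑ j, A i j * B i j

/-- Spectral norm (largest singular value), as the ℓ²→ℓ² operator norm. -/
noncomputable def spec {n1 n2 : ℕ} (A : Matrix (Fin n1) (Fin n2) ℝ) : ℝ :=
  sSup {c : ℝ | ∃ x : Fin n2 → ℝ, (∑ j, x j ^ 2) ≤ 1 ∧
    c = Real.sqrt (∑ i, (∑ j, A i j * x j) ^ 2)}

/-- Nuclear norm (sum of singular values), via duality with the spectral norm. -/
noncomputable def nuc {n1 n2 : ℕ} (A : Matrix (Fin n1) (Fin n2) ℝ) : ℝ :=
  sSup {c : ℝ | ∃ B : Matrix (Fin n1) (Fin n2) ℝ, spec B ≤ 1 ∧ c = minner A B}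

/-- P_Ω: the matrix agreeing with `M` on `Ω` and zero off `Ω`. -/
noncomputable def projS {n1 n2 : ℕ} (Ω : Finset (Fin n1 × Fin n2))
    (M : Matrix (Fin n1) (Fin n2) ℝ) : Matrix (Fin n1) (Fin n2) ℝ :=
  Matrix.of fun i j => if (i, j) ∈ Ω then M i j else 0

/-- Entrywise sign matrix. -/
noncomputable def signM {n1 n2 : ℕ} (A : Matrix (Fin n1) (Fin n2) ℝ) :
    Matrix (Fin n1) (Fin n2) ℝ :=
  Matrix.of fun i j => Real.sign (A i j)

/-- The tangent space T = {UQᵀ + RVᵀ}. -/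
def memT {n1 n2 r : ℕ} (U : Matrix (Fin n1) (Fin r) ℝ) (V : Matrix (Fin n2) (Fin r) ℝ)
    (M : Matrix (Fin n1) (Fin n2) ℝ) : Prop :=
  ∃ (Q : Matrix (Fin n2) (Fin r) ℝ) (R : Matrix (Fin n1) (Fin r) ℝ), M = U * Qᵀ + R * Vᵀ

/-- Membership in T⊥, the orthogonal complement of the tangent space. -/
def memTperp {n1 n2 r : ℕ} (U : Matrix (Fin n1) (Fin r) ℝ) (V : Matrix (Fin n2) (Fin r) ℝ)
    (W : Matrix (Fin n1) (Fin n2) ℝ) : Prop :=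
  ∀ M, memT U V M → minner W M = 0

/-- (L̂, Ŝ) is a global minimizer of the √PCP objective
`‖L‖_* + λ‖S‖₁ + μ‖L + S − D‖_F`. -/
def IsRootPCPMin {n1 n2 : ℕ} (D : Matrix (Fin n1) (Fin n2) ℝ) (lam mu : ℝ)
    (Lh Sh : Matrix (Fin n1) (Fin n2) ℝ) : Prop :=
  ∀ L S : Matrix (Fin n1) (Fin n2) ℝ,
    nuc Lh + lam * l1norm Sh + mu * frob (Lh + Sh - D) ≤
      nuc L + lam * l1norm S + mu * frob (L + S - D)

/-- (L̂, Ŝ) is a minimizer of StablePCP_c(δ):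
minimize `‖L‖_* + λ‖S‖₁` subject to `‖L + S − D‖_F ≤ δ`. -/
def IsStablePCPMin {n1 n2 : ℕ} (D : Matrix (Fin n1) (Fin n2) ℝ) (lam δ : ℝ)
    (Lh Sh : Matrix (Fin n1) (Fin n2) ℝ) : Prop :=
  frob (Lh + Sh - D) ≤ δ ∧
    ∀ L S : Matrix (Fin n1) (Fin n2) ℝ, frob (L + S - D) ≤ δ →
      nuc Lh + lam * l1norm Sh ≤ nuc L + lam * l1norm S

/-- Frobenius distance between pairs: ‖(L,S) − (L',S')‖_F. -/
noncomputable def pairDist {n1 n2 : ℕ} (L S L' S' : Matrix (Fin n1) (Fin n2) ℝ) : ℝ :=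
  Real.sqrt (frob (L - L') ^ 2 + frob (S - S') ^ 2)

/-- Sample space of the random sparsity model: a uniformly random support of
cardinality m together with iid uniform random signs. -/
abbrev SampleSpace (n1 n2 m : ℕ) : Type :=
  {Ω : Finset (Fin n1 × Fin n2) // Ω.card = m} × ((Fin n1 × Fin n2) → Bool)

/-- The sparse matrix S0 built from fixed magnitudes `a` and a random sample:
S0 vanishes off Ω and equals ±a on Ω according to the random signs. -/
noncomputable def sparseOf {n1 n2 m : ℕ} (a : Fin n1 × Fin n2 → ℝ) (ω : SampleSpace n1 n2 m) :
    Matrix (Fin n1) (Fin n2) ℝ :=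
  Matrix.of fun i j =>
    if (i, j) ∈ ω.1.1 then (if ω.2 (i, j) then a (i, j) else -a (i, j)) else 0

open Classical in
/-- Uniform probability of an event on a finite sample space. -/
noncomputable def unifProb {α : Type*} [Fintype α] (E : α → Prop) : ℝ :=
  ((Finset.univ.filter fun a => E a).card : ℝ) / (Fintype.card α : ℝ)

/-- The trace inner product as a trace. -/
theorem minner_eq_trace {n1 n2 : ℕ} (A B : Matrix (Fin n1) (Fin n2) ℝ) :
    minner A B = (Aᵀ * B).trace := by
  simp only [minner, Matrix.trace, Matrix.diag, Matrix.mul_apply, Matrix.transpose_apply]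
  exact Finset.sum_comm

theorem minner_add_left {n1 n2 : ℕ} (A B C : Matrix (Fin n1) (Fin n2) ℝ) :
    minner (A + B) C = minner A C + minner B C := by
  simp [minner_eq_trace, Matrix.add_mul]

theorem minner_sub_left {n1 n2 : ℕ} (A B C : Matrix (Fin n1) (Fin n2) ℝ) :
    minner (A - B) C = minner A C - minner B C := by
  simp [minner_eq_trace, Matrix.sub_mul]

theorem minner_add_right {n1 n2 : ℕ} (A B C : Matrix (Fin n1) (Fin n2) ℝ) :
    minner A (B + C) = minner A B + minner A C := by
  simp [minner_eq_trace, Matrix.mul_add]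

theorem minner_smul_right {n1 n2 : ℕ} (c : ℝ) (A B : Matrix (Fin n1) (Fin n2) ℝ) :
    minner A (c • B) = c * minner A B := by
  simp [minner_eq_trace]

theorem minner_comm {n1 n2 : ℕ} (A B : Matrix (Fin n1) (Fin n2) ℝ) :
    minner A B = minner B A := by
  simp only [minner, mul_comm]

theorem frob_nonneg {n1 n2 : ℕ} (A : Matrix (Fin n1) (Fin n2) ℝ) : 0 ≤ frob A :=
  Real.sqrt_nonneg _

theorem frob_sq {n1 n2 : ℕ} (A : Matrix (Fin n1) (Fin n2) ℝ) : frob A ^ 2 = minner A A := by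
  rw [frob, Real.sq_sqrt (by positivity)]
  simp only [minner, sq]

theorem frob_neg {n1 n2 : ℕ} (A : Matrix (Fin n1) (Fin n2) ℝ) : frob (-A) = frob A := by
  simp [frob]

/-- Cauchy–Schwarz for the trace inner product. -/
theorem abs_minner_le {n1 n2 : ℕ} (A B : Matrix (Fin n1) (Fin n2) ℝ) :
    |minner A B| ≤ frob A * frob B := by
  apply abs_le_of_sq_le_sq _ (mul_nonneg (frob_nonneg A) (frob_nonneg B))
  rw [mul_pow, frob_sq, frob_sq]
  simp only [minner, ← Fintype.sum_prod_type', ← sq]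
  exact Finset.sum_mul_sq_le_sq_mul_sq Finset.univ
    (fun p : Fin n1 × Fin n2 => A p.1 p.2) (fun p => B p.1 p.2)

/-- The squared Euclidean norm of `A x` is at most `‖A‖_F² ‖x‖²`. -/
theorem sum_mulVec_sq_le_frob {n1 n2 : ℕ} (A : Matrix (Fin n1) (Fin n2) ℝ) (x : Fin n2 → ℝ) :
    ∑ i, (∑ j, A i j * x j) ^ 2 ≤ frob A ^ 2 * ∑ j, x j ^ 2 := by
  rw [frob, Real.sq_sqrt (by positivity), Finset.sum_mul]
  exact Finset.sum_le_sum fun i _ => Finset.sum_mul_sq_le_sq_mul_sq _ _ _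

theorem bddAbove_spec {n1 n2 : ℕ} (A : Matrix (Fin n1) (Fin n2) ℝ) :
    BddAbove {c : ℝ | ∃ x : Fin n2 → ℝ, (∑ j, x j ^ 2) ≤ 1 ∧
      c = Real.sqrt (∑ i, (∑ j, A i j * x j) ^ 2)} := by
  refine ⟨frob A, ?_⟩
  rintro _ ⟨x, hx, rfl⟩
  refine Real.sqrt_le_iff.2 ⟨frob_nonneg A, (sum_mulVec_sq_le_frob A x).trans ?_⟩
  exact mul_le_of_le_one_right (sq_nonneg _) hx

theorem sum_mulVec_sq_le_of_spec_le {n1 n2 : ℕ} {A : Matrix (Fin n1) (Fin n2) ℝ} {c : ℝ}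
    (h : spec A ≤ c) (x : Fin n2 → ℝ) :
    ∑ i, (∑ j, A i j * x j) ^ 2 ≤ c ^ 2 * ∑ j, x j ^ 2 := by
  rcases (show (0 : ℝ) ≤ ∑ j, x j ^ 2 by positivity).eq_or_lt with h0 | hpos
  · simpa [← h0] using sum_mulVec_sq_le_frob A x
  · set s := Real.sqrt (∑ j, x j ^ 2) with hs
    have hs0 : 0 < s := Real.sqrt_pos.2 hpos
    have hs2 : s ^ 2 = ∑ j, x j ^ 2 := Real.sq_sqrt hpos.le
    have hle : Real.sqrt (∑ i, (∑ j, A i j * (s⁻¹ * x j)) ^ 2) ≤ c := by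
      refine le_trans (le_csSup (bddAbove_spec A) ⟨fun j => s⁻¹ * x j, ?_, rfl⟩) h
      simp only [mul_pow, ← Finset.mul_sum]
      rw [← hs2, ← mul_pow, inv_mul_cancel₀ hs0.ne', one_pow]
    have hsq := (Real.sqrt_le_iff.1 hle).2
    have hscale : ∑ i, (∑ j, A i j * (s⁻¹ * x j)) ^ 2
        = (s ^ 2)⁻¹ * ∑ i, (∑ j, A i j * x j) ^ 2 := by
      rw [Finset.mul_sum]
      refine Finset.sum_congr rfl fun i _ => ?_
      rw [← inv_pow, ← mul_pow, Finset.mul_sum]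
      congr 1
      exact Finset.sum_congr rfl fun j _ => by ring
    rw [hscale, inv_mul_le_iff₀ (by positivity)] at hsq
    rw [← hs2]
    linarith

theorem dotProduct_mulVec_self_le_of_spec_le {n1 n2 : ℕ} {A : Matrix (Fin n1) (Fin n2) ℝ} {c : ℝ}
    (h : spec A ≤ c) (x : Fin n2 → ℝ) :
    (A *ᵥ x) ⬝ᵥ (A *ᵥ x) ≤ c ^ 2 * (x ⬝ᵥ x) := by
  have := sum_mulVec_sq_le_of_spec_le h x
  simpa only [dotProduct, Matrix.mulVec, sq] using this

theorem spec_le_one_of_dotProduct_le {n1 n2 : ℕ} {A : Matrix (Fin n1) (Fin n2) ℝ}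
    (h : ∀ x : Fin n2 → ℝ, (A *ᵥ x) ⬝ᵥ (A *ᵥ x) ≤ x ⬝ᵥ x) : spec A ≤ 1 := by
  refine csSup_le ⟨_, 0, by simp, rfl⟩ ?_
  rintro _ ⟨x, hx, rfl⟩
  refine Real.sqrt_le_iff.2 ⟨zero_le_one, ?_⟩
  have := h x
  simp only [dotProduct, Matrix.mulVec, ← sq] at this
  linarith

/-- `‖A‖_F² ≤ n2 ‖A‖²`. -/
theorem frob_sq_le_of_spec_le {n1 n2 : ℕ} {A : Matrix (Fin n1) (Fin n2) ℝ} {c : ℝ}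
    (h : spec A ≤ c) : frob A ^ 2 ≤ c ^ 2 * n2 := by
  rw [frob, Real.sq_sqrt (by positivity), Finset.sum_comm]
  calc ∑ j, ∑ i, A i j ^ 2 ≤ ∑ _j : Fin n2, c ^ 2 := by
        refine Finset.sum_le_sum fun j _ => ?_
        simpa [Pi.single_apply, ite_pow] using sum_mulVec_sq_le_of_spec_le h (Pi.single j 1)
    _ = c ^ 2 * n2 := by simp [mul_comm]

/-- Duality: the nuclear norm dominates pairings with spectral contractions. -/
theorem minner_le_nuc {n1 n2 : ℕ} (A : Matrix (Fin n1) (Fin n2) ℝ)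
    {B : Matrix (Fin n1) (Fin n2) ℝ} (hB : spec B ≤ 1) : minner A B ≤ nuc A := by
  refine le_csSup ⟨frob A * Real.sqrt n2, ?_⟩ ⟨B, hB, rfl⟩
  rintro _ ⟨C, hC, rfl⟩
  refine (le_abs_self _).trans ((abs_minner_le A C).trans ?_)
  refine mul_le_mul_of_nonneg_left (Real.le_sqrt_of_sq_le ?_) (frob_nonneg A)
  simpa using frob_sq_le_of_spec_le hC

theorem minner_diagonal_factorization {n1 n2 r : ℕ} (U : Matrix (Fin n1) (Fin r) ℝ)
    (V : Matrix (Fin n2) (Fin r) ℝ) (σ : Fin r → ℝ) (B : Matrix (Fin n1) (Fin n2) ℝ) :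
    minner (U * Matrix.diagonal σ * Vᵀ) B = ∑ k, σ k * (Uᵀ * B * V) k k := by
  rw [minner_eq_trace, Matrix.transpose_mul, Matrix.transpose_mul, Matrix.transpose_transpose,
    Matrix.diagonal_transpose, Matrix.mul_assoc, Matrix.trace_mul_comm, Matrix.mul_assoc,
    Matrix.mul_assoc, ← Matrix.mul_assoc Uᵀ]
  simp [Matrix.trace, Matrix.diagonal_mul]

/-- The nuclear norm of a matrix with the given SVD is at most the sum of its singular values. -/
theorem nuc_le_sum_singularValues {n1 n2 r : ℕ} {U : Matrix (Fin n1) (Fin r) ℝ}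
    {V : Matrix (Fin n2) (Fin r) ℝ} {σ : Fin r → ℝ} (hU : Uᵀ * U = 1) (hV : Vᵀ * V = 1)
    (hσ : ∀ k, 0 ≤ σ k) : nuc (U * Matrix.diagonal σ * Vᵀ) ≤ ∑ k, σ k := by
  refine csSup_le ⟨_, 0, spec_le_one_of_dotProduct_le fun x => ?_, rfl⟩ ?_
  · simpa [dotProduct] using Finset.sum_nonneg fun i _ => mul_self_nonneg (x i)
  rintro _ ⟨B, hB, rfl⟩
  rw [minner_diagonal_factorization]
  refine Finset.sum_le_sum fun k _ => mul_le_of_le_one_right (hσ k) ?_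
  have hu : ∑ i, U i k ^ 2 = 1 := by
    simpa [Matrix.mul_apply, sq] using congrFun (congrFun hU k) k
  have hv : ∑ j, V j k ^ 2 = 1 := by
    simpa [Matrix.mul_apply, sq] using congrFun (congrFun hV k) k
  have hBv := sum_mulVec_sq_le_of_spec_le hB (fun j => V j k)
  have hcs := Finset.sum_mul_sq_le_sq_mul_sq Finset.univ (fun i => U i k)
    (fun i => ∑ j, B i j * V j k)
  have heq : (Uᵀ * B * V) k k = ∑ i, U i k * ∑ j, B i j * V j k := by
    rw [Matrix.mul_assoc]
    simp [Matrix.mul_apply]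
  rw [hu, one_mul] at hcs
  rw [hv] at hBv
  rw [heq]
  nlinarith

/-- Elements of `T⊥` have column space orthogonal to `U`. -/
theorem memTperp.transpose_mul_eq_zero {n1 n2 r : ℕ} {U : Matrix (Fin n1) (Fin r) ℝ}
    {V : Matrix (Fin n2) (Fin r) ℝ} {W : Matrix (Fin n1) (Fin n2) ℝ} (hW : memTperp U V W) :
    Uᵀ * W = 0 := by
  have h := hW (U * (Uᵀ * W)) ⟨(Uᵀ * W)ᵀ, 0, by simp⟩
  rw [minner_comm, minner_eq_trace, Matrix.transpose_mul, Matrix.mul_assoc] at h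
  exact Matrix.trace_conjTranspose_mul_self_eq_zero_iff.1 (by
    simpa [Matrix.conjTranspose_eq_transpose_of_trivial] using h)

/-- Elements of `T⊥` have row space orthogonal to `V`. -/
theorem memTperp.mul_eq_zero {n1 n2 r : ℕ} {U : Matrix (Fin n1) (Fin r) ℝ}
    {V : Matrix (Fin n2) (Fin r) ℝ} {W : Matrix (Fin n1) (Fin n2) ℝ} (hW : memTperp U V W) :
    W * V = 0 := by
  have h := hW (W * V * Vᵀ) ⟨0, W * V, by simp⟩
  rw [minner_comm, minner_eq_trace, Matrix.transpose_mul, Matrix.transpose_transpose,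
    Matrix.mul_assoc, Matrix.trace_mul_comm, Matrix.mul_assoc] at h
  exact Matrix.trace_conjTranspose_mul_self_eq_zero_iff.1 (by
    simpa [Matrix.conjTranspose_eq_transpose_of_trivial] using h)

/-- Subgradients of the nuclear norm: `U Vᵀ + W` is a contraction. -/
theorem spec_mul_transpose_add_le_one {n1 n2 r : ℕ} {U : Matrix (Fin n1) (Fin r) ℝ}
    {V : Matrix (Fin n2) (Fin r) ℝ} {W : Matrix (Fin n1) (Fin n2) ℝ}
    (hU : Uᵀ * U = 1) (hV : Vᵀ * V = 1) (hW : memTperp U V W) (hWnorm : spec W ≤ 1) :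
    spec (U * Vᵀ + W) ≤ 1 := by
  refine spec_le_one_of_dotProduct_le fun x => ?_
  set a : Fin r → ℝ := Vᵀ *ᵥ x with ha
  have hUU : (U *ᵥ a) ⬝ᵥ (U *ᵥ a) = a ⬝ᵥ a := by
    rw [Matrix.dotProduct_mulVec, ← Matrix.mulVec_transpose, Matrix.mulVec_mulVec, hU,
      Matrix.one_mulVec]
  have hUW : (W *ᵥ x) ⬝ᵥ (U *ᵥ a) = 0 := by
    rw [Matrix.dotProduct_mulVec, ← Matrix.mulVec_transpose, Matrix.mulVec_mulVec,
      hW.transpose_mul_eq_zero, Matrix.zero_mulVec, zero_dotProduct]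
  have hWx : W *ᵥ (x - V *ᵥ a) = W *ᵥ x := by
    rw [Matrix.mulVec_sub, Matrix.mulVec_mulVec, hW.mul_eq_zero, Matrix.zero_mulVec, sub_zero]
  have hVV : (V *ᵥ a) ⬝ᵥ (V *ᵥ a) = a ⬝ᵥ a := by
    rw [Matrix.dotProduct_mulVec, ← Matrix.mulVec_transpose, Matrix.mulVec_mulVec, hV,
      Matrix.one_mulVec]
  have hxV : x ⬝ᵥ (V *ᵥ a) = a ⬝ᵥ a := by
    rw [Matrix.dotProduct_mulVec, ← Matrix.mulVec_transpose]
  have hres := dotProduct_mulVec_self_le_of_spec_le hWnorm (x - V *ᵥ a)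
  rw [hWx] at hres
  simp only [sub_dotProduct, dotProduct_sub, hVV, hxV, dotProduct_comm (V *ᵥ a) x] at hres
  rw [Matrix.add_mulVec, ← Matrix.mulVec_mulVec, ← ha]
  simp only [add_dotProduct, dotProduct_add, hUU, hUW, dotProduct_comm (U *ᵥ a) (W *ᵥ x)]
  linarith

theorem frob_sq_mul_transpose_add {n1 n2 r : ℕ} {U : Matrix (Fin n1) (Fin r) ℝ}
    {V : Matrix (Fin n2) (Fin r) ℝ} {W : Matrix (Fin n1) (Fin n2) ℝ}
    (hU : Uᵀ * U = 1) (hV : Vᵀ * V = 1) (hW : memTperp U V W) :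
    frob (U * Vᵀ + W) ^ 2 = r + frob W ^ 2 := by
  have hcross : minner W (U * Vᵀ) = 0 := hW _ ⟨V, 0, by simp⟩
  have hUV : minner (U * Vᵀ) (U * Vᵀ) = r := by
    have := minner_diagonal_factorization U V (fun _ => 1) (U * Vᵀ)
    rw [← Matrix.mul_assoc, hU, Matrix.one_mul, hV] at this
    simpa using this
  rw [frob_sq, frob_sq, minner_add_left, minner_add_right, minner_add_right,
    minner_comm (U * Vᵀ) W, hcross, hUV]
  ring

/-- Pairings with matrices with entries in `[-1, 1]` are dominated by the `ℓ¹` norm. -/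
theorem minner_le_l1norm {n1 n2 : ℕ} (A : Matrix (Fin n1) (Fin n2) ℝ)
    {K : Matrix (Fin n1) (Fin n2) ℝ} (hK : ∀ i j, |K i j| ≤ 1) : minner A K ≤ l1norm A := by
  refine Finset.sum_le_sum fun i _ => Finset.sum_le_sum fun j _ => ?_
  refine (le_abs_self _).trans ?_
  rw [abs_mul]
  exact mul_le_of_le_one_right (abs_nonneg _) (hK i j)

theorem frob_add_le {n1 n2 : ℕ} (A B : Matrix (Fin n1) (Fin n2) ℝ) :
    frob (A + B) ≤ frob A + frob B := by
  refine abs_le_of_sq_le_sq' ?_ (add_nonneg (frob_nonneg A) (frob_nonneg B)) |>.2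
  have h := (le_abs_self _).trans (abs_minner_le A B)
  rw [add_sq, frob_sq, frob_sq, frob_sq, minner_add_left, minner_add_right, minner_add_right,
    minner_comm B A]
  linarith

/-- A `√PCP` minimizer solves the constrained problem at its own residual level. -/
theorem IsRootPCPMin.isStablePCPMin {n1 n2 : ℕ} {D Lh Sh : Matrix (Fin n1) (Fin n2) ℝ}
    {lam mu : ℝ} (hmu : 0 ≤ mu) (h : IsRootPCPMin D lam mu Lh Sh) :
    IsStablePCPMin D lam (frob (Lh + Sh - D)) Lh Sh := by
  refine ⟨le_rfl, fun L S hLS => ?_⟩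
  have := h L S
  have := mul_le_mul_of_nonneg_left hLS hmu
  linarith

theorem frob_le_pairDist {n1 n2 : ℕ} (L S L₁ S₁ : Matrix (Fin n1) (Fin n2) ℝ) :
    frob (S - S₁) ≤ pairDist L S L₁ S₁ :=
  Real.le_sqrt_of_sq_le (by linarith [sq_nonneg (frob (L - L₁))])

/-- Certificate inequality: the objective gap at a `√PCP` minimizer is controlled by the
residual paired with `U Vᵀ + W` and the sparse error paired with `P_Ω H`. -/
theorem IsRootPCPMin.residual_le {n1 n2 r : ℕ} {lam mu : ℝ} (hlam : 0 ≤ lam)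
    {U : Matrix (Fin n1) (Fin r) ℝ} {V : Matrix (Fin n2) (Fin r) ℝ} {σ : Fin r → ℝ}
    {S0 Z0 : Matrix (Fin n1) (Fin n2) ℝ} {Ω : Finset (Fin n1 × Fin n2)}
    (hU : Uᵀ * U = 1) (hV : Vᵀ * V = 1) (hσ : ∀ k, 0 ≤ σ k)
    (hS0 : ∀ p : Fin n1 × Fin n2, p ∈ Ω ↔ S0 p.1 p.2 ≠ 0)
    {W F H : Matrix (Fin n1) (Fin n2) ℝ}
    (hcert : U * Vᵀ + W = lam • (signM S0 + F + projS Ω H))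
    (hW : memTperp U V W) (hWnorm : spec W ≤ 1)
    (hF : projS Ω F = 0) (hFnorm : ∀ i j, |F i j| ≤ 1)
    {Lh Sh : Matrix (Fin n1) (Fin n2) ℝ}
    (hmin : IsRootPCPMin (U * Matrix.diagonal σ * Vᵀ + S0 + Z0) lam mu Lh Sh) :
    mu * frob (Lh + Sh - (U * Matrix.diagonal σ * Vᵀ + S0 + Z0)) ≤ mu * frob Z0 +
      (frob (Lh + Sh - (U * Matrix.diagonal σ * Vᵀ + S0 + Z0)) + frob Z0) * frob (U * Vᵀ + W) +
      lam * (frob (Sh - S0) * frob (projS Ω H)) := by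
  have hK : ∀ i j, |(signM S0 + F) i j| ≤ 1 ∧ |S0 i j| ≤ S0 i j * (signM S0 + F) i j := by
    intro i j
    by_cases hij : (i, j) ∈ Ω
    · have hFz : F i j = 0 := by simpa [projS, hij] using congrFun (congrFun hF i) j
      have hne : S0 i j ≠ 0 := (hS0 (i, j)).1 hij
      rcases lt_or_gt_of_ne hne with h | h
      · simp [signM, hFz, Real.sign_of_neg h, abs_of_neg h]
      · simp [signM, hFz, Real.sign_of_pos h, abs_of_pos h]
    · have hz : S0 i j = 0 := by
        by_contra hne
        exact hij ((hS0 (i, j)).2 hne)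
      simpa [signM, hz] using hFnorm i j
  set L0 := U * Matrix.diagonal σ * Vᵀ with hL0
  set G := U * Vᵀ + W with hG
  have hS0l1 : l1norm S0 ≤ minner S0 (signM S0 + F) :=
    Finset.sum_le_sum fun i _ => Finset.sum_le_sum fun j _ => (hK i j).2
  have hShl1 : minner Sh (signM S0 + F) ≤ l1norm Sh := minner_le_l1norm Sh fun i j => (hK i j).1
  have hLh : minner Lh G ≤ nuc Lh :=
    minner_le_nuc Lh (spec_mul_transpose_add_le_one hU hV hW hWnorm)
  have hL0nuc : nuc L0 ≤ minner L0 G := by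
    refine (nuc_le_sum_singularValues hU hV hσ).trans (le_of_eq ?_)
    rw [hL0, hG, minner_diagonal_factorization, Matrix.mul_add, hW.transpose_mul_eq_zero,
      add_zero, ← Matrix.mul_assoc, hU, Matrix.one_mul, hV]
    simp
  have hopt := hmin L0 S0
  have hZ : L0 + S0 - (L0 + S0 + Z0) = -Z0 := by abel
  rw [hZ, frob_neg] at hopt
  set E := Lh + Sh - (L0 + S0 + Z0) with hE
  have hsplit : ∀ A, minner A G = lam * (minner A (signM S0 + F) + minner A (projS Ω H)) :=
    fun A => by rw [hcert, minner_smul_right, minner_add_right]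
  have hEZ : minner (E + Z0) G = minner Lh G + minner Sh G - minner L0 G - minner S0 G := by
    simp only [hE, minner_add_left, minner_sub_left]
    ring
  have hEZle : -minner (E + Z0) G ≤ (frob E + frob Z0) * frob G :=
    (neg_le_abs _).trans ((abs_minner_le _ _).trans
      (mul_le_mul_of_nonneg_right (frob_add_le E Z0) (frob_nonneg G)))
  have hHle := mul_le_mul_of_nonneg_left
    ((le_abs_self _).trans (abs_minner_le (Sh - S0) (projS Ω H))) hlam
  rw [minner_sub_left] at hHle
  have h1 := mul_le_mul_of_nonneg_left hS0l1 hlam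
  have h2 := mul_le_mul_of_nonneg_left hShl1 hlam
  have h3 := hsplit Sh
  have h4 := hsplit S0
  linarith

/-- combining the dual certificate with the two StablePCP_c error bounds
yields the final √PCP error bound 560·√(n1·n2)·‖Z0‖_F. -/
theorem rootPCP_final_bound {n1 n2 r : ℕ}
    (hn2 : 1 ≤ n2) (hn : n2 ≤ n1) (hr : (r : ℝ) ≤ (n2 : ℝ) / 10)
    (U : Matrix (Fin n1) (Fin r) ℝ) (V : Matrix (Fin n2) (Fin r) ℝ) (σ : Fin r → ℝ)
    (L0 S0 Z0 : Matrix (Fin n1) (Fin n2) ℝ) (Ω : Finset (Fin n1 × Fin n2))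
    (hU : Uᵀ * U = 1) (hV : Vᵀ * V = 1) (hσ : ∀ k, 0 < σ k)
    (hL0 : L0 = U * Matrix.diagonal σ * Vᵀ)
    (hS0 : ∀ p : Fin n1 × Fin n2, p ∈ Ω ↔ S0 p.1 p.2 ≠ 0)
    (W F H : Matrix (Fin n1) (Fin n2) ℝ)
    (hcert : U * Vᵀ + W = (Real.sqrt n1)⁻¹ • (signM S0 + F + projS Ω H))
    (hW : memTperp U V W) (hWnorm : spec W ≤ 1 / 2)
    (hF : projS Ω F = 0) (hFnorm : ∀ i j, |F i j| ≤ 1 / 2)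
    (hH : frob (projS Ω H) ≤ 1 / (260 * Real.sqrt 2))
    (Lh Sh : Matrix (Fin n1) (Fin n2) ℝ)
    (hmin : IsRootPCPMin (L0 + S0 + Z0) (Real.sqrt n1)⁻¹ (Real.sqrt ((n2 : ℝ) / 2)) Lh Sh)
    (hi : frob Z0 ≤ frob (Lh + Sh - (L0 + S0 + Z0)) →
      ∀ L S : Matrix (Fin n1) (Fin n2) ℝ,
        IsStablePCPMin (L0 + S0 + Z0) (Real.sqrt n1)⁻¹
            (frob (Lh + Sh - (L0 + S0 + Z0))) L S →
          pairDist L S L0 S0 ≤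
            Real.sqrt (320 * (n1 : ℝ) * n2 + 4) * frob (Lh + Sh - (L0 + S0 + Z0)))
    (hii : frob (Lh + Sh - (L0 + S0 + Z0)) ≤ frob Z0 →
      ∀ L S : Matrix (Fin n1) (Fin n2) ℝ,
        IsStablePCPMin (L0 + S0 + Z0) (Real.sqrt n1)⁻¹
            (frob (Lh + Sh - (L0 + S0 + Z0))) L S →
          pairDist L S L0 S0 ≤ Real.sqrt (720 * (n1 : ℝ) * n2 + 2) * frob Z0) :
    pairDist Lh Sh L0 S0 ≤ 560 * Real.sqrt ((n1 : ℝ) * n2) * frob Z0 := by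
  have hn2R : (1 : ℝ) ≤ n2 := by exact_mod_cast hn2
  have hn1R : (1 : ℝ) ≤ n1 := by exact_mod_cast hn2.trans hn
  have hN : (1 : ℝ) ≤ n1 * n2 := one_le_mul_of_one_le_of_one_le hn1R hn2R
  have hz := frob_nonneg Z0
  have hst := hmin.isStablePCPMin (Real.sqrt_nonneg _)
  have hsq : ∀ a b c : ℝ, 0 ≤ c → a + b ≤ c ^ 2 → 0 ≤ b →
      Real.sqrt (a * n1 * n2 + b) ≤ c * Real.sqrt ((n1 : ℝ) * n2) := by
    intro a b c hc hab hb
    refine Real.sqrt_le_iff.2 ⟨by positivity, ?_⟩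
    rw [mul_pow, Real.sq_sqrt (by positivity)]
    nlinarith
  rcases le_total (frob (Lh + Sh - (L0 + S0 + Z0))) (frob Z0) with hle | hle
  · refine (hii hle Lh Sh hst).trans (mul_le_mul_of_nonneg_right ?_ hz)
    exact hsq 720 2 560 (by norm_num) (by norm_num) (by norm_num)
  have hdist := (hi hle Lh Sh hst).trans (mul_le_mul_of_nonneg_right
    (hsq 320 4 18 (by norm_num) (by norm_num) (by norm_num)) (frob_nonneg _))
  subst hL0
  have hres := hmin.residual_le (by positivity) hU hV (fun k => (hσ k).le) hS0 hcert hW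
    (hWnorm.trans (by norm_num)) hF (fun i j => (hFnorm i j).trans (by norm_num))
  have hG2 := frob_sq_mul_transpose_add hU hV hW
  have hW2 := frob_sq_le_of_spec_le hWnorm
  have hSd := (frob_le_pairDist Lh Sh (U * Matrix.diagonal σ * Vᵀ) S0).trans hdist
  set δ := frob (Lh + Sh - (U * Matrix.diagonal σ * Vᵀ + S0 + Z0)) with hδ
  have hδ0 : 0 ≤ δ := frob_nonneg _
  have hGle : frob (U * Vᵀ + W) ≤ 0.6 * Real.sqrt n2 := by
    refine abs_le_of_sq_le_sq' ?_ (by positivity) |>.2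
    rw [mul_pow, Real.sq_sqrt (by positivity)]
    linarith
  set m := Real.sqrt (n2 : ℝ) with hm
  have hm0 : 0 < m := Real.sqrt_pos.2 (by linarith)
  set t := (Real.sqrt 2)⁻¹ with ht
  have ht0 : 0 < t := by positivity
  have ht2 : t ^ 2 = 1 / 2 := by rw [ht, inv_pow, Real.sq_sqrt (by norm_num)]; norm_num
  have htlo : 0.707 ≤ t := by nlinarith
  have hthi : t ≤ 0.708 := by nlinarith
  have hmu : Real.sqrt ((n2 : ℝ) / 2) = m * t := by
    rw [Real.sqrt_div (by positivity), div_eq_mul_inv]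
  have hs1 : 0 < Real.sqrt (n1 : ℝ) := Real.sqrt_pos.2 (by linarith)
  have hlast : (Real.sqrt (n1 : ℝ))⁻¹ * (frob (Sh - S0) * frob (projS Ω H)) ≤
      18 / 260 * t * m * δ := by
    calc (Real.sqrt (n1 : ℝ))⁻¹ * (frob (Sh - S0) * frob (projS Ω H))
        ≤ (Real.sqrt (n1 : ℝ))⁻¹ *
          ((18 * Real.sqrt ((n1 : ℝ) * n2) * δ) * (1 / (260 * Real.sqrt 2))) := by
          refine mul_le_mul_of_nonneg_left ?_ (by positivity)
          exact mul_le_mul hSd hH (frob_nonneg _) (by positivity)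
      _ = 18 / 260 * t * m * δ := by
          rw [Real.sqrt_mul (by positivity), ht, hm]
          field_simp
  have hGmul : (δ + frob Z0) * frob (U * Vᵀ + W) ≤ (δ + frob Z0) * (0.6 * m) :=
    mul_le_mul_of_nonneg_left hGle (by positivity)
  rw [hmu] at hres
  have hscaled : m * (t * δ) ≤
      m * (t * frob Z0 + (δ + frob Z0) * 0.6 + 18 / 260 * t * δ) := by linarith
  have hreduced := le_of_mul_le_mul_left hscaled hm0
  have hδz : δ ≤ 30 * frob Z0 := by nlinarith
  refine hdist.trans ?_
  have := mul_le_mul_of_nonneg_left hδz (Real.sqrt_nonneg ((n1 : ℝ) * n2))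
  nlinarith [mul_nonneg (Real.sqrt_nonneg ((n1 : ℝ) * n2)) hz]
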